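/- arXiv:1906.09131 — 2 statements merged into one kernel-verified Lean document; each statement's English description precedes it below -/
import Mathlib

section
/- Let 𝔄 be a structure interpreting Σ ∪ {t} with t transitive, and let ψ be a basic FL²1T^u-formula over Σ ∪ {t}. If 𝔄 ⊨ ψ, then C(𝔄) ⊨ ψ, where C(𝔄) is the certificate of 𝔄. -/
/- STATEMENT 2: If a structure satisfies a basic FL²1Tᵘ-formula, then so does its
certificate. -/

namespace FlutedCertificates

/-- A 1-type over the unary signature `Sig` (a maximal consistent conjunction of unary
literals, identified with a truth-value assignment to the unary predicates). -/
abbrev OneType (Sig : Type) := Sig → Prop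

/-- A structure interpreting the unary signature `Sig` together with the distinguished
binary predicate `t`. -/
structure Str (Sig : Type) (A : Type) where
  P : Sig → A → Prop
  T : A → A → Prop

/-- The 1-type of an element. -/
def Str.tp {Sig A : Type} (M : Str Sig A) (a : A) : OneType Sig :=
  fun p => M.P p a

/-- A super-type over `Sig`: a pair of a 1-type and a set of 1-types. -/
abbrev SuperType (Sig : Type) := OneType Sig × Set (OneType Sig)

/-- The super-type of an element: its 1-type together with the 1-types of the
elements to which it is `t`-related. -/
def Str.stp {Sig A : Type} (M : Str Sig A) (a : A) : SuperType Sig :=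
  (M.tp a, { π | ∃ b, M.T a b ∧ M.tp b = π })

/-- `tp(S)`: the 1-types occurring as first components of super-types in `S`. -/
def tps {Sig : Type} (S : Set (SuperType Sig)) : Set (OneType Sig) :=
  { π | ∃ Ps, (π, Ps) ∈ S }

/-- A certificate: a set `S` of super-types together with a transitive relation `≪` on
`tp(S)` satisfying conditions (C1) and (C2). -/
structure IsCertificate {Sig : Type} (S : Set (SuperType Sig))
    (ll : OneType Sig → OneType Sig → Prop) : Prop where
  trans : Transitive ll
  rel_on_tps : ∀ π π', ll π π' → π ∈ tps S ∧ π' ∈ tps S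
  C1 : ∀ π Ps, (π, Ps) ∈ S → ∀ π' ∈ Ps, ∃ Ps', (π', Ps') ∈ S ∧ Ps' ⊆ Ps
  C2 : ∀ π π' Ps Ps', ll π π' → (π, Ps) ∈ S → (π', Ps') ∈ S → insert π' Ps' ⊆ Ps

/-- The set of super-types realized in `𝔄`. -/
def certS {Sig A : Type} (M : Str Sig A) : Set (SuperType Sig) :=
  Set.range M.stp

/-- The relation `≪` of the certificate of `𝔄`: `π ≪ π'` iff `π` and `π'` are realized
in `𝔄` and `𝔄 ⊨ ∀x(π → ∀y(π'(y) → t(x,y)))`. -/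
def certLL {Sig A : Type} (M : Str Sig A) (π π' : OneType Sig) : Prop :=
  (∃ a, M.tp a = π) ∧ (∃ b, M.tp b = π') ∧
    ∀ a b, M.tp a = π → M.tp b = π' → M.T a b


/-- Quantifier-free formulas over the unary signature `Sig`, in a single variable. -/
inductive QF (Sig : Type) : Type
  | atom (p : Sig) : QF Sig
  | fls : QF Sig
  | not (φ : QF Sig) : QF Sig
  | and (φ ψ : QF Sig) : QF Sig
  | or (φ ψ : QF Sig) : QF Sig

def QF.eval {Sig : Type} (v : Sig → Prop) : QF Sig → Prop
  | .atom p => v p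
  | .fls => False
  | .not φ => ¬ QF.eval v φ
  | .and φ ψ => QF.eval v φ ∧ QF.eval v ψ
  | .or φ ψ => QF.eval v φ ∨ QF.eval v ψ

/-- Basic FL²1Tᵘ-formulas: `∃x.μ`, `∀x.μ`, `∀x(π → ∃y(μ(y) ∧ ±t(x,y)))` and
`∀x(π → ∀y(π'(y) → ±t(x,y)))`. -/
inductive Basic (Sig : Type) : Type
  | exQF (μ : QF Sig)
  | allQF (μ : QF Sig)
  | allExT (π : OneType Sig) (μ : QF Sig) (sign : Bool)
  | allAllT (π π' : OneType Sig) (sign : Bool)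

/-- Satisfaction of a basic formula in a structure. -/
def StrSat {Sig A : Type} (M : Str Sig A) : Basic Sig → Prop
  | .exQF μ => ∃ a : A, μ.eval (M.tp a)
  | .allQF μ => ∀ a : A, μ.eval (M.tp a)
  | .allExT π μ s => ∀ a : A, M.tp a = π →
      ∃ b : A, μ.eval (M.tp b) ∧ (if s then M.T a b else ¬ M.T a b)
  | .allAllT π π' s => ∀ a : A, M.tp a = π → ∀ b : A, M.tp b = π' →
      (if s then M.T a b else ¬ M.T a b)

/-- Satisfaction of a basic formula by a certificate `(S, ≪)` (conditions (i)–(vi)). -/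
def CertSat {Sig : Type} (S : Set (SuperType Sig))
    (ll : OneType Sig → OneType Sig → Prop) : Basic Sig → Prop
  | .exQF μ => ∃ π ∈ tps S, μ.eval π
  | .allQF μ => ∀ π ∈ tps S, μ.eval π
  | .allExT π μ true => ∀ Ps, (π, Ps) ∈ S → ∃ π' ∈ Ps, μ.eval π'
  | .allExT π μ false => ∀ Ps, (π, Ps) ∈ S →
      ∃ π' Ps', (π', Ps') ∈ S ∧ μ.eval π' ∧ ¬ ∃ α ∈ insert π Ps, ll α π'
  | .allAllT π π' true => π ∈ tps S → π' ∈ tps S → ll π π'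
  | .allAllT π π' false => ∀ Ps, (π, Ps) ∈ S → π' ∉ Ps

section Certificate

variable {Sig A : Type} {M : Str Sig A}

theorem mk_mem_certS_iff {π : OneType Sig} {Ps : Set (OneType Sig)} :
    (π, Ps) ∈ certS M ↔ ∃ a, M.tp a = π ∧ (M.stp a).2 = Ps :=
  exists_congr fun _ => Prod.mk_inj

theorem forall_mk_mem_certS {π : OneType Sig} {p : Set (OneType Sig) → Prop} :
    (∀ Ps, (π, Ps) ∈ certS M → p Ps) ↔ ∀ a, M.tp a = π → p (M.stp a).2 := by
  simp only [mk_mem_certS_iff]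
  constructor
  · exact fun h a ha => h _ ⟨a, ha, rfl⟩
  · rintro h _ ⟨a, ha, rfl⟩
    exact h a ha

theorem tps_certS : tps (certS M) = Set.range M.tp := by
  ext π
  constructor
  · rintro ⟨Ps, hPs⟩
    obtain ⟨a, ha, -⟩ := mk_mem_certS_iff.mp hPs
    exact ⟨a, ha⟩
  · rintro ⟨a, rfl⟩
    exact ⟨(M.stp a).2, a, rfl⟩

theorem exists_mem_stp_snd {a : A} {p : OneType Sig → Prop} :
    (∃ π ∈ (M.stp a).2, p π) ↔ ∃ b, p (M.tp b) ∧ M.T a b := by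
  constructor
  · rintro ⟨_, ⟨b, hab, rfl⟩, hb⟩
    exact ⟨b, hb, hab⟩
  · rintro ⟨b, hb, hab⟩
    exact ⟨M.tp b, ⟨b, hab, rfl⟩, hb⟩

/- Contrapositively, `¬ t(a,b)` makes `tp(b)` a witness for condition (iii) at `stp(a)`. -/
theorem T_of_certLL_of_mem_insert [IsTrans A M.T] {a b : A} {α : OneType Sig}
    (hα : α ∈ insert (M.tp a) (M.stp a).2) (hll : certLL M α (M.tp b)) : M.T a b := by
  obtain ⟨-, -, hT⟩ := hll
  rcases hα with rfl | ⟨c, hac, rfl⟩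
  · exact hT a b rfl rfl
  · exact _root_.trans hac (hT c b rfl rfl)

theorem certSat_exQF_iff {μ : QF Sig} :
    CertSat (certS M) (certLL M) (.exQF μ) ↔ StrSat M (.exQF μ) := by
  simp only [CertSat, StrSat, tps_certS, Set.exists_range_iff]

theorem certSat_allQF_iff {μ : QF Sig} :
    CertSat (certS M) (certLL M) (.allQF μ) ↔ StrSat M (.allQF μ) := by
  simp only [CertSat, StrSat, tps_certS, Set.forall_mem_range]

theorem certSat_allExT_true_iff {π : OneType Sig} {μ : QF Sig} :
    CertSat (certS M) (certLL M) (.allExT π μ true) ↔ StrSat M (.allExT π μ true) := by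
  simp only [CertSat, StrSat, forall_mk_mem_certS, exists_mem_stp_snd, if_true]

/- Only an implication: `¬ tp(a) ≪ tp(b)` says merely that some elements with the 1-types of `a`
and `b` are unrelated, so the certificate condition does not give back a witness for `a` itself. -/
theorem certSat_allExT_false [IsTrans A M.T] {π : OneType Sig} {μ : QF Sig}
    (h : StrSat M (.allExT π μ false)) : CertSat (certS M) (certLL M) (.allExT π μ false) := by
  refine forall_mk_mem_certS.mpr ?_
  rintro a rfl
  obtain ⟨b, hμ, hab : ¬ M.T a b⟩ := by simpa using h a rfl
  refine ⟨M.tp b, (M.stp b).2, ⟨b, rfl⟩, hμ, ?_⟩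
  rintro ⟨α, hα, hll⟩
  exact hab (T_of_certLL_of_mem_insert hα hll)

theorem certSat_allAllT_true_iff {π π' : OneType Sig} :
    CertSat (certS M) (certLL M) (.allAllT π π' true) ↔ StrSat M (.allAllT π π' true) := by
  simp only [CertSat, StrSat, tps_certS, if_true]
  constructor
  · intro h a ha b hb
    obtain ⟨-, -, hT⟩ := h ⟨a, ha⟩ ⟨b, hb⟩
    exact hT a b ha hb
  · exact fun h hπ hπ' => ⟨hπ, hπ', fun a b ha hb => h a ha b hb⟩

theorem certSat_allAllT_false_iff {π π' : OneType Sig} :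
    CertSat (certS M) (certLL M) (.allAllT π π' false) ↔ StrSat M (.allAllT π π' false) := by
  simp only [CertSat, StrSat, forall_mk_mem_certS, Bool.false_eq_true, if_false]
  refine forall₂_congr fun a _ => ?_
  constructor
  · exact fun h b hb hab => h ⟨b, hab, hb⟩
  · rintro h ⟨b, hab, hb⟩
    exact h b hb hab

end Certificate

/-- Lemma 3.  Let `𝔄` be a structure interpreting `Σ ∪ {t}` with `t`
transitive, and `ψ` a basic FL²1Tᵘ-formula.  If `𝔄 ⊨ ψ` then `C(𝔄) ⊨ ψ`. -/
theorem certificate_satisfies {Sig A : Type} (M : Str Sig A)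
    (htrans : Transitive M.T) (ψ : Basic Sig) (h : StrSat M ψ) :
    CertSat (certS M) (certLL M) ψ := by
  have : IsTrans A M.T := ⟨@htrans⟩
  match ψ with
  | .exQF _ => exact certSat_exQF_iff.mpr h
  | .allQF _ => exact certSat_allQF_iff.mpr h
  | .allExT _ _ true => exact certSat_allExT_true_iff.mpr h
  | .allExT _ _ false => exact certSat_allExT_false h
  | .allAllT _ _ true => exact certSat_allAllT_true_iff.mpr h
  | .allAllT _ _ false => exact certSat_allAllT_false_iff.mpr h

end FlutedCertificates
end

section
/- Let φ be an FL^m1T-formula for m ≥ 2 (the m-variable fluted fragment with one distinguished transitive relation). If φ is satisfiable, then φ has a model of size at most (m+1)-tuply exponential in the size of φ; hence the satisfiability problem for FL^m1T is in nondeterministic (m+1)-tuply exponential time. In particular, the fluted fragment with one transitive relation, FL1T, has the finite model property. -/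
/- STATEMENT 11: FL^m1T has the (m+1)-tuply exponential-sized model property; in
particular FL1T has the finite model property (Theorem 6). -/
namespace FlutedOneTrans

/-- A fluted `m`-atom over the signature of predicates `Fin n` with arities `ar`,
together with the distinguished binary predicate `t`: either `p(x_{m-k+1},…,x_m)` for a
predicate `p` of arity `k ≤ m`, or `t(x_{m-1},x_m)` (when `2 ≤ m`). -/
inductive FAtom (n : ℕ) (ar : Fin n → ℕ) (m : ℕ) : Type
  | pred (i : Fin n) (h : ar i ≤ m) : FAtom n ar m
  | tat (h : 2 ≤ m) : FAtom n ar m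

/-- A structure interpreting the signature `(n, ar)` together with the distinguished
binary predicate `t`. -/
structure Str (n : ℕ) (ar : Fin n → ℕ) (A : Type) where
  R : ∀ i : Fin n, (Fin (ar i) → A) → Prop
  T : A → A → Prop

def FAtom.Sat {n : ℕ} {ar : Fin n → ℕ} {A : Type} (M : Str n ar A) {m : ℕ} :
    FAtom n ar m → (Fin m → A) → Prop
  | .pred i h, v => M.R i (fun j => v ⟨m - ar i + j.val, by have := j.isLt; omega⟩)
  | .tat h, v => M.T (v ⟨m - 2, by omega⟩) (v ⟨m - 1, by omega⟩)

def FAtom.size {n : ℕ} {ar : Fin n → ℕ} {m : ℕ} : FAtom n ar m → ℕ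
  | .pred i _ => ar i + 1
  | .tat _ => 3

/-- Fluted formulas over `(n, ar)` together with `t`; the index `m` records that the
free variables form a suffix of `x₁, …, x_m`, atoms ending at the last variable. -/
inductive FL (n : ℕ) (ar : Fin n → ℕ) : ℕ → Type
  | atom {m : ℕ} (a : FAtom n ar m) : FL n ar m
  | fls {m : ℕ} : FL n ar m
  | not {m : ℕ} (φ : FL n ar m) : FL n ar m
  | and {m : ℕ} (φ ψ : FL n ar m) : FL n ar m
  | or {m : ℕ} (φ ψ : FL n ar m) : FL n ar m
  | ex {m : ℕ} (φ : FL n ar (m + 1)) : FL n ar m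
  | all {m : ℕ} (φ : FL n ar (m + 1)) : FL n ar m

def FL.Sat {n : ℕ} {ar : Fin n → ℕ} {A : Type} (M : Str n ar A) :
    ∀ {m : ℕ}, FL n ar m → (Fin m → A) → Prop
  | _, .atom a, v => FAtom.Sat M a v
  | _, .fls, _ => False
  | _, .not φ, v => ¬ FL.Sat M φ v
  | _, .and φ ψ, v => FL.Sat M φ v ∧ FL.Sat M ψ v
  | _, .or φ ψ, v => FL.Sat M φ v ∨ FL.Sat M ψ v
  | _, .ex φ, v => ∃ a : A, FL.Sat M φ (Fin.snoc v a)
  | _, .all φ, v => ∀ a : A, FL.Sat M φ (Fin.snoc v a)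

def FL.size {n : ℕ} {ar : Fin n → ℕ} : ∀ {m : ℕ}, FL n ar m → ℕ
  | _, .atom a => a.size
  | _, .fls => 1
  | _, .not φ => FL.size φ + 1
  | _, .and φ ψ => FL.size φ + FL.size ψ + 1
  | _, .or φ ψ => FL.size φ + FL.size ψ + 1
  | _, .ex φ => FL.size φ + 1
  | _, .all φ => FL.size φ + 1

/-- The largest variable index featured in a fluted formula: a sentence `φ : FL n ar 0`
belongs to the `m`-variable fluted fragment `FL^m1T` iff `FL.depth φ ≤ m`. -/
def FL.depth {n : ℕ} {ar : Fin n → ℕ} : ∀ {m : ℕ}, FL n ar m → ℕ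
  | m, .atom _ => m
  | m, .fls => m
  | _, .not φ => FL.depth φ
  | _, .and φ ψ => max (FL.depth φ) (FL.depth ψ)
  | _, .or φ ψ => max (FL.depth φ) (FL.depth ψ)
  | _, .ex φ => FL.depth φ
  | _, .all φ => FL.depth φ

/-- Satisfaction of a fluted sentence. -/
def SatSent {n : ℕ} {ar : Fin n → ℕ} {A : Type} (M : Str n ar A) (φ : FL n ar 0) : Prop :=
  FL.Sat M φ (fun i => i.elim0)

/-- `φ` is satisfiable in a structure interpreting `t` as a transitive relation. -/
def SatisfiableT {n : ℕ} {ar : Fin n → ℕ} (φ : FL n ar 0) : Prop :=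
  ∃ (A : Type) (_ : Nonempty A) (M : Str n ar A), Transitive M.T ∧ SatSent M φ

/-- A fluted `m`-literal. -/
abbrev Lit (n : ℕ) (ar : Fin n → ℕ) (m : ℕ) := Bool × FAtom n ar m

/-- A fluted `m`-clause: a disjunction of fluted `m`-literals. -/
abbrev Clause (n : ℕ) (ar : Fin n → ℕ) (m : ℕ) := List (Lit n ar m)

def Clause.Sat {n : ℕ} {ar : Fin n → ℕ} {A : Type} (M : Str n ar A) {m : ℕ}
    (c : Clause n ar m) (v : Fin m → A) : Prop :=
  ∃ l ∈ c, (if l.1 then FAtom.Sat M l.2 v else ¬ FAtom.Sat M l.2 v)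

def Clause.size {n : ℕ} {ar : Fin n → ℕ} {m : ℕ} (c : Clause n ar m) : ℕ :=
  (c.map fun l => FAtom.size l.2 + 1).sum + 1

/-- A formula of `FL^{k+1}1T` in clause normal form:
`∀x₁⋯x_{k+1}.Ω ∧ ⋀ᵢ ∀x₁⋯x_k(αᵢ → ∃x_{k+1}.Γᵢ) ∧ ⋀ⱼ ∀x₁⋯x_k(βⱼ → ∀x_{k+1}.Δⱼ)`,
where `Ω`, the `Γᵢ` and the `Δⱼ` are sets of fluted `(k+1)`-clauses and the `αᵢ`, `βⱼ`
are fluted `k`-atoms. -/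
structure CNF (n : ℕ) (ar : Fin n → ℕ) (k : ℕ) where
  static : List (Clause n ar (k + 1))
  exCon : List (FAtom n ar k × List (Clause n ar (k + 1)))
  allCon : List (FAtom n ar k × List (Clause n ar (k + 1)))

def CNF.Sat {n : ℕ} {ar : Fin n → ℕ} {k : ℕ} {A : Type} (M : Str n ar A)
    (φ : CNF n ar k) : Prop :=
  (∀ v : Fin (k + 1) → A, ∀ c ∈ φ.static, Clause.Sat M c v) ∧
  (∀ g ∈ φ.exCon, ∀ v : Fin k → A, FAtom.Sat M g.1 v →
    ∃ a : A, ∀ c ∈ g.2, Clause.Sat M c (Fin.snoc v a)) ∧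
  (∀ g ∈ φ.allCon, ∀ v : Fin k → A, FAtom.Sat M g.1 v →
    ∀ a : A, ∀ c ∈ g.2, Clause.Sat M c (Fin.snoc v a))

def CNF.size {n : ℕ} {ar : Fin n → ℕ} {k : ℕ} (φ : CNF n ar k) : ℕ :=
  (φ.static.map Clause.size).sum +
  (φ.exCon.map fun g => FAtom.size g.1 + (g.2.map Clause.size).sum + 1).sum +
  (φ.allCon.map fun g => FAtom.size g.1 + (g.2.map Clause.size).sum + 1).sum + 1

/-- `φ` (a clause-normal-form formula) is satisfiable with `t` transitive. -/
def CNF.SatisfiableT {n : ℕ} {ar : Fin n → ℕ} {k : ℕ} (φ : CNF n ar k) : Prop :=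
  ∃ (A : Type) (_ : Nonempty A) (M : Str n ar A), Transitive M.T ∧ CNF.Sat M φ

/-- Renaming of predicates along an arity-preserving signature inclusion. -/
def FAtom.lift {n n' : ℕ} {ar : Fin n → ℕ} {ar' : Fin n' → ℕ} (ι : Fin n → Fin n')
    (hι : ∀ i, ar' (ι i) = ar i) {m : ℕ} : FAtom n ar m → FAtom n' ar' m
  | .pred i h => .pred (ι i) (by rw [hι i]; exact h)
  | .tat h => .tat h

def FL.lift {n n' : ℕ} {ar : Fin n → ℕ} {ar' : Fin n' → ℕ} (ι : Fin n → Fin n')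
    (hι : ∀ i, ar' (ι i) = ar i) : ∀ {m : ℕ}, FL n ar m → FL n' ar' m
  | _, .atom a => .atom (FAtom.lift ι hι a)
  | _, .fls => .fls
  | _, .not φ => .not (FL.lift ι hι φ)
  | _, .and φ ψ => .and (FL.lift ι hι φ) (FL.lift ι hι ψ)
  | _, .or φ ψ => .or (FL.lift ι hι φ) (FL.lift ι hι ψ)
  | _, .ex φ => .ex (FL.lift ι hι φ)
  | _, .all φ => .all (FL.lift ι hι φ)


/-- The tower function: `tower k x` is the `k`-fold iterated exponential of `x`. -/
def tower : ℕ → ℕ → ℕ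
  | 0, x => x
  | k + 1, x => 2 ^ tower k x

/-!
The fluted `r`-type of a tuple records its atoms and the `(r - 1)`-types of its one-element
extensions; there are finitely many of them, and the `r`-type of the empty tuple decides all
sentences of depth at most `r`.  Given a model `M` we build a finite structure whose empty tuple
has the same `m`-type.

Because atoms are suffixes, a pair `x y` in a fluted formula matters only through `T x y` and
through the type of `y` alone.  So we first label the elements of `M` by their types and replace
`(M, T)` by a finite transitive `(B, S)` in which every point sees, by related and by unrelated
pairs, the same labels as some point of `M`.  Elements of `M` with the same neighbouring labels
are merged, in two copies: two copies are needed because a point may see one label both ways.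

Then every point of `B` is cloned, a clone carrying a requested `r`-type for each rank `r`.
A tuple of clones is realised in `M` one element at a time, each new element being compatible
with the realisation of the tail of the tuple and granting the request of the corresponding
clone whenever possible.  Reading off the atoms of tuples of clones from their realisations gives
the finite model.

The labels are `(m - 1)`-types, of which there are `m`-tuply exponentially many; points of `B`
are given by sets of labels, which costs the last exponential.
-/

local notation:65 v " ▹ " b => (Fin.snoc v b : Fin (_ + 1) → _)

/-! ### Fluted types -/

section Types

variable {n : ℕ} {ar : Fin n → ℕ} {A D : Type} {M : Str n ar A} {N : Str n ar D}

/-- The predicate symbol of an atom, `none` standing for `t`; it determines the fluted atom. -/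
def FAtom.symbol {m : ℕ} : FAtom n ar m → Option (Fin n)
  | .pred i _ => some i
  | .tat _ => none

theorem FAtom.symbol_injective {m : ℕ} :
    Function.Injective (FAtom.symbol : FAtom n ar m → Option (Fin n)) := by
  rintro (_ | _) (_ | _) h <;> simp_all [FAtom.symbol]

/-- The atom with the same predicate symbol, with the variables renumbered so that a new one is
prepended. -/
def FAtom.shift {m : ℕ} : FAtom n ar m → FAtom n ar (m + 1)
  | .pred i h => .pred i (Nat.le.step h)
  | .tat h => .tat (Nat.le.step h)

theorem FAtom.sat_shift {m : ℕ} (a : FAtom n ar m) (v : Fin (m + 1) → A) :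
    a.shift.Sat M v ↔ a.Sat M (Fin.tail v) := by
  cases a with
  | pred i h =>
    simp only [shift, Sat, Fin.tail, Fin.succ_mk]
    refine iff_of_eq (congrArg (M.R i) (funext fun j => congrArg v (Fin.ext ?_)))
    dsimp only
    omega
  | tat h =>
    simp only [shift, Sat, Fin.tail, Fin.succ_mk]
    refine iff_of_eq (congrArg₂ M.T (congrArg v (Fin.ext ?_)) (congrArg v (Fin.ext ?_))) <;>
    · dsimp only
      omega

/-- The fluted atoms satisfied by a tuple, given by their predicate symbols. -/
def atomSet (M : Str n ar A) {k : ℕ} (v : Fin k → A) : Set (Option (Fin n)) :=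
  FAtom.symbol '' {a : FAtom n ar k | a.Sat M v}

theorem atomSet_eq_iff {k : ℕ} {u : Fin k → A} {w : Fin k → D} :
    atomSet M u = atomSet N w ↔ ∀ a : FAtom n ar k, a.Sat M u ↔ a.Sat N w := by
  rw [atomSet, atomSet, FAtom.symbol_injective.image_injective.eq_iff, Set.ext_iff]
  rfl

/-- The possible fluted `r`-types: a set of predicate symbols (for the atoms of a tuple) and, if
`r > 0`, a set of `(r - 1)`-types (for its one-element extensions). -/
def FType (n : ℕ) : ℕ → Type
  | 0 => Set (Option (Fin n))
  | r + 1 => Set (Option (Fin n)) × Set (FType n r)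

instance FType.finite (n : ℕ) : ∀ r, Finite (FType n r)
  | 0 => inferInstanceAs (Finite (Set (Option (Fin n))))
  | r + 1 =>
    have := FType.finite n r
    inferInstanceAs (Finite (Set (Option (Fin n)) × Set (FType n r)))

/-- The fluted `r`-type of a tuple; it decides the formulas in which `r` more variables are
quantified. -/
def ftype (M : Str n ar A) : ∀ (r : ℕ) {k : ℕ}, (Fin k → A) → FType n r
  | 0, _, v => atomSet M v
  | r + 1, _, v => (atomSet M v, Set.range fun b => ftype M r (v ▹ b))

theorem atomSet_eq_of_ftype_eq {r k : ℕ} {u : Fin k → A} {w : Fin k → D}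
    (h : ftype M r u = ftype N r w) : atomSet M u = atomSet N w :=
  match r with
  | 0 => h
  | _ + 1 => congrArg Prod.fst h

theorem exists_ftype_snoc_eq {r k : ℕ} {u : Fin k → A} {w : Fin k → D}
    (h : ftype M (r + 1) u = ftype N (r + 1) w) (b : A) :
    ∃ c, ftype N r (w ▹ c) = ftype M r (u ▹ b) :=
  (Set.ext_iff.1 (congrArg Prod.snd h) _).1 (Set.mem_range_self b)

theorem biTotal_ftype_snoc {r k : ℕ} {u : Fin k → A} {w : Fin k → D}
    (h : ftype M (r + 1) u = ftype N (r + 1) w) :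
    Relator.BiTotal fun b c => ftype M r (u ▹ b) = ftype N r (w ▹ c) :=
  ⟨fun b => (exists_ftype_snoc_eq h b).imp fun _ => Eq.symm, exists_ftype_snoc_eq h.symm⟩

theorem ftype_succ_eq {r k : ℕ} {u : Fin k → A} {w : Fin k → D}
    (atoms : atomSet M u = atomSet N w)
    (h : Relator.BiTotal fun b c => ftype M r (u ▹ b) = ftype N r (w ▹ c)) :
    ftype M (r + 1) u = ftype N (r + 1) w :=
  Prod.ext atoms <| Set.Subset.antisymm
    (Set.range_subset_iff.2 fun b => (h.1 b).imp fun _ => Eq.symm) (Set.range_subset_iff.2 h.2)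

theorem ftype_eq_of_succ {r k : ℕ} {u : Fin k → A} {w : Fin k → D}
    (h : ftype M (r + 1) u = ftype N (r + 1) w) : ftype M r u = ftype N r w := by
  induction r generalizing k with
  | zero => exact atomSet_eq_of_ftype_eq h
  | succ r ih =>
    have hbi := biTotal_ftype_snoc h
    exact ftype_succ_eq (atomSet_eq_of_ftype_eq h)
      ⟨fun b => (hbi.1 b).imp fun _ => ih, fun c => (hbi.2 c).imp fun _ => ih⟩

theorem le_depth {k : ℕ} (φ : FL n ar k) : k ≤ φ.depth := by
  induction φ with
  | atom | fls => exact le_rfl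
  | not _ ih => exact ih
  | and _ _ ih | or _ _ ih => exact ih.trans (le_max_left _ _)
  | ex _ ih | all _ ih => exact (Nat.le_succ _).trans ih

theorem exists_eq_succ_of_depth_le {k r : ℕ} (φ : FL n ar (k + 1)) (hφ : φ.depth ≤ k + r) :
    ∃ s, r = s + 1 ∧ φ.depth ≤ k + 1 + s := by
  have := le_depth φ
  exact ⟨r - 1, by omega, by omega⟩

theorem sat_iff_of_ftype_eq {k r : ℕ} (φ : FL n ar k) (hφ : φ.depth ≤ k + r)
    {u : Fin k → A} {w : Fin k → D} (h : ftype M r u = ftype N r w) :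
    φ.Sat M u ↔ φ.Sat N w := by
  induction φ generalizing r with
  | atom a => exact atomSet_eq_iff.1 (atomSet_eq_of_ftype_eq h) a
  | fls => exact Iff.rfl
  | not φ ih => exact not_congr (ih hφ h)
  | and φ ψ ihφ ihψ =>
    exact and_congr (ihφ (le_of_max_le_left hφ) h) (ihψ (le_of_max_le_right hφ) h)
  | or φ ψ ihφ ihψ =>
    exact or_congr (ihφ (le_of_max_le_left hφ) h) (ihψ (le_of_max_le_right hφ) h)
  | ex φ ih =>
    obtain ⟨s, rfl, hs⟩ := exists_eq_succ_of_depth_le φ hφ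
    exact (biTotal_ftype_snoc h).rel_exists fun _ _ => ih hs
  | all φ ih =>
    obtain ⟨s, rfl, hs⟩ := exists_eq_succ_of_depth_le φ hφ
    exact (biTotal_ftype_snoc h).rel_forall fun _ _ => ih hs

end Types

/-! ### Finite covers of labelled transitive relations -/

section Cover

variable {A B C : Type*}

/-- `p` maps the points of `(B, S)` to elements of `(A, T)`, labelled by `l`, so that all labels
occur, and `x` sees the same labels along `S`, and along its complement, as `p x` does along `T`
and its complement. -/
structure IsLabelCover (T : A → A → Prop) (l : A → C) (S : B → B → Prop) (p : B → A) : Prop where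
  exists_label_eq (a : A) : ∃ x, l (p x) = l a
  forth (x y : B) : ∃ b, (T (p x) b ↔ S x y) ∧ l b = l (p y)
  back (x : B) (b : A) : ∃ y, (T (p x) b ↔ S x y) ∧ l (p y) = l b

variable (T : A → A → Prop) (l : A → C)

/-- The labels of the `T`-successors of `a`. -/
def succLabels (a : A) : Set C := l '' {b | T a b}

/-- The labels of the elements that are not `T`-successors of `a`. -/
def nonsuccLabels (a : A) : Set C := l '' {b | ¬ T a b}

/-- The labels of `a` and of its `T`-predecessors. -/
def predLabels (a : A) : Set C := l '' {b | b = a ∨ T b a}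

/-- A transitive relation on two copies of `A`.  It contains `T` on each copy; across the copies
it contains only the pairs forced by some label in `predLabels T l b` all of whose bearers are
`T`-successors of `a`. -/
def CoverRel (x y : A × Bool) : Prop :=
  l y.1 ∈ succLabels T l x.1 ∧ succLabels T l y.1 ⊆ succLabels T l x.1 ∧
    nonsuccLabels T l x.1 ⊆ nonsuccLabels T l y.1 ∧ predLabels T l x.1 ⊆ predLabels T l y.1 ∧
    (x.2 = y.2 ∨ ¬ predLabels T l y.1 ⊆ nonsuccLabels T l x.1)

instance : IsTrans (A × Bool) (CoverRel T l) where
  trans x y z := by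
    rintro ⟨-, hsucc, hnon, hpred, hcopy⟩ ⟨hl', hsucc', hnon', hpred', hcopy'⟩
    refine ⟨hsucc hl', hsucc'.trans hsucc, hnon.trans hnon', hpred.trans hpred', ?_⟩
    by_cases hxy : x.2 = y.2
    · exact hcopy'.imp hxy.trans fun h hsub => h (hsub.trans hnon)
    · exact Or.inr fun hsub => hcopy.resolve_left hxy (hpred'.trans hsub)

variable {T l}

theorem mem_nonsuccLabels_of_not {a b : A} (h : ¬ T a b) : l b ∈ nonsuccLabels T l a :=
  ⟨b, h, rfl⟩

theorem rel_of_not_predLabels_subset [IsTrans A T] {a b : A}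
    (h : ¬ predLabels T l b ⊆ nonsuccLabels T l a) : T a b := by
  obtain ⟨_, ⟨c, hc, rfl⟩, hca⟩ := Set.not_subset.1 h
  have hac : T a c := not_not.1 fun hac => hca (mem_nonsuccLabels_of_not hac)
  rcases hc with rfl | hcb
  · exact hac
  · exact _root_.trans hac hcb

theorem coverRel_of_rel [IsTrans A T] {x y : A × Bool} (h : T x.1 y.1)
    (hcopy : x.2 = y.2 ∨ l y.1 ∉ nonsuccLabels T l x.1) : CoverRel T l x y := by
  refine ⟨⟨y.1, h, rfl⟩, Set.image_mono fun c hc => _root_.trans h hc,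
    Set.image_mono fun c hc hyc => hc (_root_.trans h hyc), Set.image_mono ?_,
    hcopy.imp_right fun hy hsub => hy (hsub ⟨y.1, Or.inl rfl, rfl⟩)⟩
  rintro c (rfl | hc)
  · exact Or.inr h
  · exact Or.inr (_root_.trans hc h)

variable (T l)

/-- All that `CoverRel` and a label cover need to know about an element. -/
def coverKey (a : A) : C × Set C × Set C × Set C :=
  (l a, succLabels T l a, nonsuccLabels T l a, predLabels T l a)

variable {T l} in
theorem coverRel_congr {a a' b b' : A} {i j : Bool} (ha : coverKey T l a = coverKey T l a')
    (hb : coverKey T l b = coverKey T l b') :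
    CoverRel T l (a, i) (b, j) ↔ CoverRel T l (a', i) (b', j) := by
  simp only [coverKey, Prod.mk.injEq] at ha hb
  simp only [CoverRel, ha, hb]

/-- The points of the finite cover: two copies of `A` modulo equality of `coverKey`. -/
abbrev CoverPoint : Type _ := Set.range (coverKey T l) × Bool

/-- An element of `A` represented by a point of the cover. -/
noncomputable def coverRep (x : CoverPoint T l) : A := Set.rangeSplitting (coverKey T l) x.1

theorem coverKey_coverRep (x : CoverPoint T l) : coverKey T l (coverRep T l x) = x.1 :=
  Set.apply_rangeSplitting _ _

/-- The relation on the points of the finite cover. -/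
def PointRel (x y : CoverPoint T l) : Prop :=
  CoverRel T l (coverRep T l x, x.2) (coverRep T l y, y.2)

instance : IsTrans (CoverPoint T l) (PointRel T l) where
  trans _ _ _ := fun hxy hyz => _root_.trans (r := CoverRel T l) hxy hyz

theorem isLabelCover_coverRep [IsTrans A T] :
    IsLabelCover T l (PointRel T l) (coverRep T l) := by
  have exists_point (a : A) (i : Bool) :
      ∃ y : CoverPoint T l, y.2 = i ∧ coverKey T l (coverRep T l y) = coverKey T l a :=
    ⟨(⟨_, a, rfl⟩, i), rfl, coverKey_coverRep T l _⟩
  refine ⟨fun a => ?_, fun x y => ?_, fun x b => ?_⟩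
  · obtain ⟨x, -, hx⟩ := exists_point a true
    exact ⟨x, congrArg Prod.fst hx⟩
  · by_cases hxy : PointRel T l x y
    · obtain ⟨b, hb, hlb⟩ := hxy.1
      exact ⟨b, iff_of_true hb hxy, hlb⟩
    · have hy : l (coverRep T l y) ∈ nonsuccLabels T l (coverRep T l x) := by
        by_contra hy
        exact hxy (coverRel_of_rel
          (not_not.1 fun hT => hy (mem_nonsuccLabels_of_not hT)) (Or.inr hy))
      obtain ⟨b, hb, hlb⟩ := hy
      exact ⟨b, iff_of_false hb hxy, hlb⟩
  · by_cases hb : T (coverRep T l x) b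
    · obtain ⟨y, hcopy, hy⟩ := exists_point b x.2
      refine ⟨y, iff_of_true hb ?_, congrArg Prod.fst hy⟩
      exact (coverRel_congr rfl hy).2 (coverRel_of_rel hb (Or.inl hcopy.symm))
    · obtain ⟨y, hcopy, hy⟩ := exists_point b (!x.2)
      refine ⟨y, iff_of_false hb fun hxy => hb ?_, congrArg Prod.fst hy⟩
      obtain ⟨-, -, -, -, hforced⟩ := (coverRel_congr rfl hy).1 hxy
      exact rel_of_not_predLabels_subset (hforced.resolve_left (by simp [hcopy]))

end Cover

/-! ### Clones and their realisations -/

section Clones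

theorem tail_snoc {X : Type*} {k : ℕ} (v : Fin (k + 1) → X) (y : X) :
    Fin.tail (v ▹ y) = (Fin.tail v ▹ y) := by
  conv_lhs => rw [← Fin.cons_self_tail v, ← Fin.cons_snoc_eq_snoc_cons]
  exact Fin.tail_cons _ _

/-- An element satisfying `P` (if there is one), with `f`-value `c` whenever possible. -/
noncomputable def chooseWith {A X : Type*} [Nonempty A] (P : A → Prop) (f : A → X) (c : X) : A :=
  Classical.epsilon fun b => P b ∧ ((∃ b', P b' ∧ f b' = c) → f b = c)

theorem chooseWith_spec {A X : Type*} [Nonempty A] {P : A → Prop} (h : ∃ b, P b) (f : A → X)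
    (c : X) : P (chooseWith P f c) ∧ ((∃ b, P b ∧ f b = c) → f (chooseWith P f c) = c) := by
  refine Classical.epsilon_spec (p := fun b => P b ∧ ((∃ b', P b' ∧ f b' = c) → f b = c)) ?_
  by_cases hc : ∃ b, P b ∧ f b = c
  · obtain ⟨b, hb, hbc⟩ := hc
    exact ⟨b, hb, fun _ => hbc⟩
  · exact h.imp fun b hb => ⟨hb, fun hc' => absurd hc' hc⟩

variable {n : ℕ} {ar : Fin n → ℕ} {A B : Type}

/-- The label of an element: its fluted `q`-type as a one-element tuple. -/
def label (M : Str n ar A) (q : ℕ) (a : A) : FType n q := ftype M q fun _ : Fin 1 => a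

/-- The clones of the points of `B`: each carries, for every rank `r ≤ q`, the `r`-type that it
requests for the tuples ending in it. -/
abbrev Clone (n q : ℕ) (B : Type) : Type := B × ∀ r : Fin (q + 1), FType n r

/-- `b` may be appended to `u`, the realisation of `Fin.init v`, where `w` is the realisation of
`Fin.tail v`: the tail of the extended tuple has the type of `w`, and, if `v` is a pair, `t` holds
exactly if `s` does. -/
def Admissible (M : Str n ar A) (r : ℕ) {k : ℕ} (s : Prop) (u w : Fin (k + 1) → A) (b : A) :
    Prop :=
  ftype M r (Fin.tail u ▹ b) = ftype M r w ∧ (k = 0 → (M.T (u 0) b ↔ s))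

variable [Nonempty A] (M : Str n ar A) (q : ℕ) (S : B → B → Prop) (p : B → A)

/-- The tuple of elements of `M` that a tuple of clones stands for, built from left to right.
Out of `q + 1` variables, `q - (k + 1)` remain to be quantified once `k + 2` are assigned; this is
the rank of the types used in choosing the last element of a `(k + 2)`-tuple. -/
noncomputable def realize : ∀ k : ℕ, (Fin k → Clone n q B) → Fin k → A
  | 0, _ => fun i => i.elim0
  | 1, v => fun _ => p (v 0).1
  | k + 2, v =>
    realize (k + 1) (Fin.init v) ▹
      chooseWith
        (Admissible M (q - (k + 1)) (S (v 0).1 (v (Fin.last _)).1)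
          (realize (k + 1) (Fin.init v)) (realize (k + 1) (Fin.tail v)))
        (fun b => ftype M (q - (k + 1)) (realize (k + 1) (Fin.init v) ▹ b))
        ((v (Fin.last _)).2 ⟨q - (k + 1), by omega⟩)

local notation "ρ" => realize M q S p

theorem realize_one (v : Fin 0 → Clone n q B) (y : Clone n q B) :
    ρ 1 (v ▹ y) = fun _ => p y.1 := by
  simp only [realize, Fin.snoc_zero]

theorem realize_snoc {k : ℕ} (v : Fin (k + 1) → Clone n q B) (y : Clone n q B) :
    ρ (k + 2) (v ▹ y) = (ρ (k + 1) v ▹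
      chooseWith (Admissible M (q - (k + 1)) (S (v 0).1 y.1) (ρ (k + 1) v)
          (ρ (k + 1) (Fin.tail v ▹ y)))
        (fun b => ftype M (q - (k + 1)) (ρ (k + 1) v ▹ b)) (y.2 ⟨q - (k + 1), by omega⟩)) := by
  simp only [realize, Fin.init_snoc, tail_snoc, Fin.snoc_apply_zero, Fin.snoc_last]

theorem exists_realize_snoc_eq {k : ℕ} (v : Fin k → Clone n q B) (y : Clone n q B) :
    ∃ b, ρ (k + 1) (v ▹ y) = (ρ k v ▹ b) :=
  match k with
  | 0 => ⟨p y.1, (realize_one M q S p v y).trans (Fin.snoc_zero _ _).symm⟩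
  | _ + 1 => ⟨_, realize_snoc M q S p v y⟩

theorem realize_snoc_congr {k : ℕ} (hk : k ≤ q) (v : Fin k → Clone n q B) {y y' : Clone n q B}
    (hpoint : y.1 = y'.1) (hreq : ∀ r : Fin (q + 1), q - k ≤ r → y.2 r = y'.2 r) :
    ρ (k + 1) (v ▹ y) = ρ (k + 1) (v ▹ y') := by
  induction k with
  | zero => rw [realize_one, realize_one, hpoint]
  | succ k ih =>
    have htail := ih (by omega) (Fin.tail v) fun r hr => hreq r (by omega)
    rw [realize_snoc, realize_snoc, htail, hpoint, hreq _ le_rfl]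

/-- The structure on the clones: atoms are read off from the realisations, and `t` is inherited
from `S`. -/
noncomputable def cloneStr : Str n ar (Clone n q B) where
  R i v := M.R i (ρ (ar i) v)
  T x y := S x.1 y.1

instance [IsTrans B S] : IsTrans (Clone n q B) (cloneStr M q S p).T where
  trans _ _ _ hxy hyz := _root_.trans (r := S) hxy hyz

variable {M q S p}

theorem exists_realize_snoc_admissible {r k : ℕ} (hr : r + (k + 1) = q)
    {v : Fin (k + 1) → Clone n q B} {y : Clone n q B}
    (h : ∃ b, Admissible M r (S (v 0).1 y.1) (ρ (k + 1) v) (ρ (k + 1) (Fin.tail v ▹ y)) b) :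
    ∃ b, ρ (k + 2) (v ▹ y) = (ρ (k + 1) v ▹ b) ∧
      Admissible M r (S (v 0).1 y.1) (ρ (k + 1) v) (ρ (k + 1) (Fin.tail v ▹ y)) b := by
  obtain rfl : r = q - (k + 1) := by omega
  exact ⟨_, realize_snoc M q S p v y, (chooseWith_spec h _ _).1⟩

theorem ftype_tail_realize_snoc_of_admissible {r k : ℕ} (hr : r + (k + 1) = q)
    {v : Fin (k + 1) → Clone n q B} {y : Clone n q B}
    (h : ∃ b, Admissible M r (S (v 0).1 y.1) (ρ (k + 1) v) (ρ (k + 1) (Fin.tail v ▹ y)) b) :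
    ftype M r (Fin.tail (ρ (k + 2) (v ▹ y))) = ftype M r (ρ (k + 1) (Fin.tail (v ▹ y))) := by
  obtain ⟨b, hb, htail, -⟩ := exists_realize_snoc_admissible hr h
  rw [hb, tail_snoc, tail_snoc]
  exact htail

-- The realisation of a tuple of length `k + 1` ignores the requests of its last clone for ranks
-- below `q - k`, so `y` may request the type of `b` without disturbing that of `Fin.tail v ▹ y`.
theorem exists_ftype_realize_snoc_eq_of_admissible {r k : ℕ} (hr : r + (k + 1) = q)
    {v : Fin (k + 1) → Clone n q B} {y : Clone n q B} {b : A}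
    (hb : Admissible M r (S (v 0).1 y.1) (ρ (k + 1) v) (ρ (k + 1) (Fin.tail v ▹ y)) b) :
    ∃ y', ftype M r (ρ (k + 2) (v ▹ y')) = ftype M r (ρ (k + 1) v ▹ b) := by
  obtain rfl : r = q - (k + 1) := by omega
  let rank : Fin (q + 1) := ⟨q - (k + 1), by omega⟩
  let y' : Clone n q B := (y.1, Function.update y.2 rank (ftype M rank (ρ (k + 1) v ▹ b)))
  have htail : ρ (k + 1) (Fin.tail v ▹ y) = ρ (k + 1) (Fin.tail v ▹ y') := by
    refine realize_snoc_congr M q S p (by omega) _ rfl fun s hs => ?_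
    have hne : s ≠ rank := fun h => by
      rw [h] at hs
      dsimp only [rank] at hs
      omega
    exact (Function.update_of_ne hne _ _).symm
  have hreq : y'.2 rank = ftype M rank (ρ (k + 1) v ▹ b) := Function.update_self ..
  rw [htail] at hb
  refine ⟨y', ?_⟩
  rw [realize_snoc]
  exact ((chooseWith_spec ⟨b, hb⟩ (fun b => ftype M rank (ρ (k + 1) v ▹ b)) _).2
    ⟨b, hb, hreq.symm⟩).trans hreq

variable (h : IsLabelCover M.T (label M q) S p)

include h

theorem exists_admissible {r k : ℕ} (hr : r + (k + 1) = q) (v : Fin (k + 1) → Clone n q B)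
    (y : Clone n q B) :
    ∃ b, Admissible M r (S (v 0).1 y.1) (ρ (k + 1) v) (ρ (k + 1) (Fin.tail v ▹ y)) b := by
  induction k generalizing r y with
  | zero =>
    subst hr
    obtain ⟨b, hT, hb⟩ := h.forth (v 0).1 y.1
    refine ⟨b, ?_, fun _ => hT⟩
    rw [realize_one, Fin.snoc_zero]
    exact ftype_eq_of_succ hb
  | succ k ih =>
    have htail := ftype_tail_realize_snoc_of_admissible (r := r + 1) (by omega)
      (ih (by omega) (Fin.init v) (v (Fin.last _)))
    rw [Fin.snoc_init_self] at htail
    obtain ⟨d, hd⟩ := exists_realize_snoc_eq M q S p (Fin.tail v) y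
    obtain ⟨b, hb⟩ := exists_ftype_snoc_eq htail.symm d
    refine ⟨b, ?_, fun hk => absurd hk (Nat.succ_ne_zero k)⟩
    rw [hd]
    exact hb

theorem ftype_tail_realize {r k : ℕ} (hr : r + k = q) (v : Fin (k + 1) → Clone n q B) :
    ftype M r (Fin.tail (ρ (k + 1) v)) = ftype M r (ρ k (Fin.tail v)) := by
  rw [← Fin.snoc_init_self v]
  cases k with
  | zero => exact congrArg (ftype M r) (funext fun i => i.elim0)
  | succ k =>
    exact ftype_tail_realize_snoc_of_admissible hr (exists_admissible h hr _ _)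

theorem exists_ftype_realize_snoc_eq {r k : ℕ} (hr : r + k = q) (v : Fin k → Clone n q B)
    (b : A) : ∃ y, ftype M r (ρ (k + 1) (v ▹ y)) = ftype M r (ρ k v ▹ b) := by
  induction k generalizing r b with
  | zero =>
    subst hr
    obtain ⟨x, hx⟩ := h.exists_label_eq b
    refine ⟨(x, fun r => ftype M r fun _ : Fin 1 => b), ?_⟩
    rw [realize_one, Fin.snoc_zero]
    exact hx
  | succ k ih =>
    suffices hadm : ∃ y : Clone n q B,
        Admissible M r (S (v 0).1 y.1) (ρ (k + 1) v) (ρ (k + 1) (Fin.tail v ▹ y)) b from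
      hadm.elim fun y hy => exists_ftype_realize_snoc_eq_of_admissible hr hy
    obtain _ | k := k
    · subst hr
      obtain ⟨x, hT, hx⟩ := h.back (v 0).1 b
      refine ⟨(x, fun r => ftype M r fun _ : Fin 1 => b), ?_, fun _ => hT⟩
      rw [realize_one, Fin.snoc_zero]
      exact ftype_eq_of_succ hx.symm
    · obtain ⟨c, hc⟩ :=
        exists_ftype_snoc_eq (ftype_tail_realize h (r := r + 1) (by omega) v) b
      obtain ⟨y, hy⟩ := ih (r := r + 1) (by omega) (Fin.tail v) c
      exact ⟨y, hc.symm.trans (ftype_eq_of_succ hy).symm, fun hk => absurd hk (Nat.succ_ne_zero k)⟩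

theorem sat_shift_cloneStr_iff {k : ℕ} (hk : k ≤ q) {a : FAtom n ar k}
    (ha : ∀ v, a.Sat (cloneStr M q S p) v ↔ a.Sat M (ρ k v)) (v : Fin (k + 1) → Clone n q B) :
    a.shift.Sat (cloneStr M q S p) v ↔ a.shift.Sat M (ρ (k + 1) v) := by
  have htail := ftype_tail_realize h (Nat.sub_add_cancel hk) v
  rw [FAtom.sat_shift, FAtom.sat_shift, ha, atomSet_eq_iff.1 (atomSet_eq_of_ftype_eq htail)]

theorem sat_atom_cloneStr_iff {k : ℕ} (hk : k ≤ q + 1) (a : FAtom n ar k)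
    (v : Fin k → Clone n q B) : a.Sat (cloneStr M q S p) v ↔ a.Sat M (ρ k v) := by
  cases a with
  | pred i hi =>
    induction hi with
    | refl => simp only [FAtom.Sat, cloneStr, Nat.sub_self, Nat.zero_add]
    | step hi ih => exact sat_shift_cloneStr_iff h (by omega) (ih (by omega)) v
  | tat h2 =>
    induction h2 with
    | refl =>
      have hr : q - 1 + (0 + 1) = q := by omega
      obtain ⟨b, hb, -, hT⟩ := exists_realize_snoc_admissible hr
        (exists_admissible h hr (Fin.init v) (v (Fin.last _)))
      rw [Fin.snoc_init_self] at hb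
      rw [hb]
      exact (hT rfl).symm
    | step h2 ih => exact sat_shift_cloneStr_iff h (by omega) (ih (by omega)) v

theorem ftype_cloneStr {k r : ℕ} (hr : r + k = q + 1) (v : Fin k → Clone n q B) :
    ftype (cloneStr M q S p) r v = ftype M r (ρ k v) := by
  have hatoms := atomSet_eq_iff.2 fun a => sat_atom_cloneStr_iff h (k := k) (by omega) a v
  induction r generalizing k with
  | zero => exact hatoms
  | succ r ih =>
    have ih (y : Clone n q B) := ih (by omega) (v ▹ y)
      (atomSet_eq_iff.2 fun a => sat_atom_cloneStr_iff h (by omega) a _)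
    refine ftype_succ_eq hatoms ⟨fun y => ?_, fun b => ?_⟩
    · obtain ⟨b, hb⟩ := exists_realize_snoc_eq M q S p v y
      exact ⟨b, (ih y).trans (congrArg (ftype M r) hb)⟩
    · exact (exists_ftype_realize_snoc_eq h (by omega) v b).imp fun y hy => (ih y).trans hy

end Clones

/-! ### Counting -/

section Counting

theorem tower_monotone (k : ℕ) : Monotone (tower k) := by
  induction k with
  | zero => exact monotone_id
  | succ k ih => exact fun _ _ h => Nat.pow_le_pow_right two_pos (ih h)

theorem tower_monotone_left (x : ℕ) : Monotone fun k => tower k x :=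
  monotone_nat_of_le_succ fun _ => Nat.lt_two_pow_self.le

theorem tower_pos (k : ℕ) {x : ℕ} (hx : 0 < x) : 0 < tower k x :=
  hx.trans_le (tower_monotone_left x k.zero_le)

theorem tower_add_le (k x y : ℕ) : tower k x + y ≤ tower k (x + y) := by
  induction k with
  | zero => exact le_rfl
  | succ k ih =>
    calc 2 ^ tower k x + y ≤ 2 ^ tower k x * (y + 1) := by
          rw [Nat.mul_succ, add_comm]
          exact Nat.add_le_add_right (Nat.le_mul_of_pos_left _ (Nat.two_pow_pos _)) _
      _ ≤ 2 ^ tower k x * 2 ^ y := Nat.mul_le_mul_left _ Nat.lt_two_pow_self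
      _ = 2 ^ (tower k x + y) := (pow_add _ _ _).symm
      _ ≤ 2 ^ tower k (x + y) := Nat.pow_le_pow_right two_pos ih

theorem mul_tower_le (k d : ℕ) {x : ℕ} (hx : 0 < x) : d * tower k x ≤ tower k (d * x) := by
  induction k with
  | zero => exact le_rfl
  | succ k ih =>
    obtain _ | d := d
    · simp
    calc (d + 1) * 2 ^ tower k x ≤ 2 ^ d * 2 ^ tower k x :=
          Nat.mul_le_mul_right _ Nat.lt_two_pow_self
      _ = 2 ^ (d * 1 + tower k x) := by rw [← pow_add, mul_one]
      _ ≤ 2 ^ (d * tower k x + tower k x) := by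
          gcongr
          exacts [one_le_two, tower_pos k hx]
      _ ≤ 2 ^ tower k ((d + 1) * x) := Nat.pow_le_pow_right two_pos (by rwa [← Nat.succ_mul])

theorem card_set_eq (X : Type*) [Finite X] : Nat.card (Set X) = 2 ^ Nat.card X := by
  have := Fintype.ofFinite X
  rw [Nat.card_eq_fintype_card, Fintype.card_set, Nat.card_eq_fintype_card]

theorem card_FType_le (n r : ℕ) : Nat.card (FType n r) ≤ tower (r + 1) ((r + 1) * (n + 1)) := by
  have hatoms : Nat.card (Set (Option (Fin n))) = 2 ^ (n + 1) := by simp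
  induction r with
  | zero =>
    rw [zero_add, one_mul]
    exact hatoms.le
  | succ r ih =>
    calc Nat.card (Set (Option (Fin n)) × Set (FType n r))
        = 2 ^ (Nat.card (FType n r) + (n + 1)) := by
          rw [Nat.card_prod, hatoms, card_set_eq, ← pow_add, add_comm]
      _ ≤ 2 ^ (tower (r + 1) ((r + 1) * (n + 1)) + (n + 1)) := by gcongr; exact one_le_two
      _ ≤ 2 ^ tower (r + 1) ((r + 1 + 1) * (n + 1)) := by
          rw [Nat.succ_mul (r + 1)]
          exact Nat.pow_le_pow_right two_pos (tower_add_le _ _ _)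

theorem card_CoverPoint_le {A C : Type*} [Finite C] (T : A → A → Prop) (l : A → C) :
    Nat.card (CoverPoint T l) ≤ 2 ^ (4 * Nat.card C + 1) := by
  calc Nat.card (CoverPoint T l)
      ≤ Nat.card ((C × Set C × Set C × Set C) × Bool) :=
        Nat.card_le_card_of_injective _ (Subtype.val_injective.prodMap Function.injective_id)
    _ = Nat.card C * (2 ^ Nat.card C * (2 ^ Nat.card C * 2 ^ Nat.card C)) * 2 := by
        simp [Nat.card_prod, card_set_eq]
    _ ≤ 2 ^ Nat.card C * (2 ^ Nat.card C * (2 ^ Nat.card C * 2 ^ Nat.card C)) * 2 := by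
        gcongr
        exact Nat.lt_two_pow_self.le
    _ = 2 ^ (4 * Nat.card C + 1) := by ring

theorem card_Clone_le {n q w : ℕ} (B : Type) (hw : ∀ r ≤ q, Nat.card (FType n r) ≤ w) :
    Nat.card (Clone n q B) ≤ Nat.card B * 2 ^ (w * (q + 1)) := by
  rw [Nat.card_prod, Nat.card_pi]
  gcongr
  calc ∏ r : Fin (q + 1), Nat.card (FType n r) ≤ ∏ _r : Fin (q + 1), 2 ^ w :=
        Finset.prod_le_prod' fun r _ => (hw r (Nat.le_of_lt_succ r.2)).trans Nat.lt_two_pow_self.le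
    _ = 2 ^ (w * (q + 1)) := by rw [Fin.prod_const, pow_mul]

theorem card_Clone_CoverPoint_le {n q : ℕ} {A : Type} (T : A → A → Prop) (l : A → FType n q) :
    Nat.card (Clone n q (CoverPoint T l)) ≤ tower (q + 2) ((q + 6) * ((q + 1) * (n + 1))) := by
  have hpos : 0 < (q + 1) * (n + 1) := by positivity
  set w := tower (q + 1) ((q + 1) * (n + 1))
  have hw (r : ℕ) (hr : r ≤ q) : Nat.card (FType n r) ≤ w :=
    (card_FType_le n r).trans <| (tower_monotone_left _ (by omega)).trans <|
      tower_monotone _ (by gcongr)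
  calc Nat.card (Clone n q (CoverPoint T l))
      ≤ 2 ^ (4 * Nat.card (FType n q) + 1) * 2 ^ (w * (q + 1)) :=
        (card_Clone_le _ hw).trans (Nat.mul_le_mul_right _ (card_CoverPoint_le T l))
    _ ≤ 2 ^ (4 * w + w) * 2 ^ (w * (q + 1)) := by
        gcongr
        exacts [one_le_two, hw q le_rfl, tower_pos _ hpos]
    _ = 2 ^ ((q + 6) * w) := by ring
    _ ≤ tower (q + 2) ((q + 6) * ((q + 1) * (n + 1))) :=
        Nat.pow_le_pow_right two_pos (mul_tower_le _ _ hpos)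

end Counting

/-! ### Finite models -/

theorem exists_finite_str_satSent_iff {n : ℕ} {ar : Fin n → ℕ} {A : Type} [Nonempty A]
    (M : Str n ar A) [IsTrans A M.T] (q : ℕ) :
    ∃ (D : Type) (_ : Nonempty D) (_ : Finite D) (N : Str n ar D), IsTrans D N.T ∧
      (∀ φ : FL n ar 0, φ.depth ≤ q + 1 → (SatSent N φ ↔ SatSent M φ)) ∧
      Nat.card D ≤ tower (q + 2) ((q + 6) * ((q + 1) * (n + 1))) := by
  let l := label M q
  have hcover := isLabelCover_coverRep M.T l
  obtain ⟨a⟩ := ‹Nonempty A›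
  obtain ⟨x, -⟩ := hcover.exists_label_eq a
  refine ⟨Clone n q (CoverPoint M.T l), ⟨x, fun r => ftype M r fun _ : Fin 1 => a⟩, inferInstance,
    cloneStr M q (PointRel M.T l) (coverRep M.T l), inferInstance, fun φ hφ => ?_,
    card_Clone_CoverPoint_le M.T l⟩
  exact sat_iff_of_ftype_eq φ (by omega) (ftype_cloneStr hcover (k := 0) (r := q + 1) rfl _)

theorem SatisfiableT.exists_fintype_card_le {n q : ℕ} {ar : Fin n → ℕ} {φ : FL n ar 0}
    (hφ : SatisfiableT φ) (hd : φ.depth ≤ q + 1) :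
    ∃ (A : Type) (_ : Nonempty A) (_ : Fintype A) (M : Str n ar A), IsTrans A M.T ∧ SatSent M φ ∧
      Fintype.card A ≤ tower (q + 2) ((q + 6) * ((q + 1) * (n + 1))) := by
  obtain ⟨A, _, M, hT, hM⟩ := hφ
  have : IsTrans A M.T := ⟨fun _ _ _ => @hT _ _ _⟩
  obtain ⟨D, hD, _, N, hN, hiff, hcard⟩ := exists_finite_str_satSent_iff M q
  have := Fintype.ofFinite D
  refine ⟨D, hD, this, N, hN, (hiff φ hd).2 hM, ?_⟩
  rwa [← Nat.card_eq_fintype_card]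

/-- Theorem 6.  For every `m ≥ 2`, a satisfiable `FL^m1T`-formula
has a model of size at most `(m+1)`-tuply exponential in its size (the size of a
formula over the signature `(n, ar)` being measured by `n + FL.size φ`); hence the
satisfiability problem for `FL^m1T` is in nondeterministic `(m+1)`-tuply exponential
time.  In particular, every satisfiable sentence of the fluted fragment with one
transitive relation, FL1T, has a finite model (with `t` transitive): FL1T has the
finite model property. -/
theorem flutedOneTrans_model_property :
    (∀ m : ℕ, 2 ≤ m → ∃ c : ℕ,
      ∀ (n : ℕ) (ar : Fin n → ℕ) (φ : FL n ar 0), FL.depth φ ≤ m →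
        SatisfiableT φ →
        ∃ (A : Type) (_ : Nonempty A) (_ : Fintype A) (M : Str n ar A),
          Transitive M.T ∧ SatSent M φ ∧
          Fintype.card A ≤ tower (m + 1) (c * (n + FL.size φ + 1))) ∧
    (∀ (n : ℕ) (ar : Fin n → ℕ) (φ : FL n ar 0), SatisfiableT φ →
      ∃ (A : Type) (_ : Nonempty A) (_ : Fintype A) (M : Str n ar A),
        Transitive M.T ∧ SatSent M φ) := by
  refine ⟨fun m hm => ?_, fun n ar φ hφ => ?_⟩
  · obtain ⟨q, rfl⟩ : ∃ q, m = q + 1 := ⟨m - 1, by omega⟩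
    refine ⟨(q + 6) * (q + 1), fun n ar φ hd hφ => ?_⟩
    obtain ⟨A, hA, hfin, M, hT, hM, hcard⟩ := hφ.exists_fintype_card_le hd
    refine ⟨A, hA, hfin, M, fun _ _ _ => hT.trans _ _ _, hM, hcard.trans (tower_monotone _ ?_)⟩
    rw [mul_assoc]
    gcongr
    exact n.le_add_right φ.size
  · obtain ⟨A, hA, hfin, M, hT, hM, -⟩ := hφ.exists_fintype_card_le φ.depth.le_succ
    exact ⟨A, hA, hfin, M, fun _ _ _ => hT.trans _ _ _, hM⟩

end FlutedOneTrans
end
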